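/- arXiv:2402.02681 — 8 statements merged into one kernel-verified Lean document; each statement's English description precedes it below -/
import Mathlib

section
/- Let G be an abelian group and n a natural number such that every element of G is an n-th power (for all g ∈ G there exists g' with g'^n = g). Let C be a nontrivial subgroup of G such that c^n = 1 for every c ∈ C. Then C has no complement in G: there is no subgroup H of G such that every element of G can be written uniquely as c·h with c ∈ C and h ∈ H. -/
/-- In an abelian group in which every element is an `n`-th power, a nontrivial subgroup
all of whose elements satisfy `c ^ n = 1` has no complement. -/
theorem no_complement_of_divisible
    {G : Type*} [CommGroup G] (n : ℕ)
    (hdiv : ∀ g : G, ∃ g' : G, g' ^ n = g)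
    (C : Subgroup G) (hC : C ≠ ⊥) (hCn : ∀ c ∈ C, c ^ n = 1) :
    ¬ ∃ H : Subgroup G, C.IsComplement' H := by
  rintro ⟨H, hH⟩
  -- Any `g = (c * h) ^ n = h ^ n` lies in `H`, so `H = ⊤`, which forces `C = ⊥`.
  have hTop : H = ⊤ := by
    refine (Subgroup.eq_top_iff' H).2 fun g => ?_
    obtain ⟨g', rfl⟩ := hdiv g
    obtain ⟨⟨c, h⟩, rfl⟩ := hH.2 g'
    simpa [mul_pow, hCn c c.2] using H.pow_mem h.2 n
  subst hTop
  exact hC (Subgroup.isComplement'_top_right.1 hH)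
end

section
/- In the additive circle group ℝ/ℤ (AddCircle (1 : ℝ)), for every natural number n ≥ 2, the cyclic subgroup of order n generated by the image of 1/n has no complement: there is no additive subgroup H of ℝ/ℤ such that every element of ℝ/ℤ can be written uniquely as c + h with c in this cyclic subgroup and h ∈ H. -/
/-!
The circle is divisible. If `H` were a complement of the subgroup `C` generated by `g = 1/n`,
decompose `1/n² = c + h` with `c ∈ C`, `h ∈ H`. Multiplication by `n` kills `C`, so
`g = n • (1/n²) = n • h` lies in `C ∩ H = 0`, whereas `g` has order `n ≥ 2`.
-/

/-- In the additive circle `ℝ/ℤ`, for every `n ≥ 2` the cyclic subgroup of order `n`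
generated by the image of `1/n` has no complement. -/
theorem addCircle_cyclic_no_complement (n : ℕ) (hn : 2 ≤ n) :
    ¬ ∃ H : AddSubgroup (AddCircle (1 : ℝ)),
        (AddSubgroup.zmultiples ((1 / (n : ℝ) : ℝ) : AddCircle (1 : ℝ))).IsComplement' H := by
  rintro ⟨H, hH⟩
  have : Fact ((0 : ℝ) < 1) := ⟨one_pos⟩
  have hn0 : (n : ℝ) ≠ 0 := by positivity
  have hord : addOrderOf ((1 / (n : ℝ) : ℝ) : AddCircle (1 : ℝ)) = n :=
    AddCircle.addOrderOf_period_div (by omega)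
  set g : AddCircle (1 : ℝ) := ((1 / (n : ℝ) : ℝ) : AddCircle (1 : ℝ)) with hg
  have hng : n • g = 0 := by
    rw [← hord]
    exact addOrderOf_nsmul_eq_zero g
  have hdiv : n • ((1 / (n : ℝ) ^ 2 : ℝ) : AddCircle (1 : ℝ)) = g := by
    rw [hg, ← AddCircle.coe_nsmul, nsmul_eq_mul]
    congr 1
    field_simp
  obtain ⟨⟨⟨c, hc⟩, ⟨h, hh⟩⟩, hch⟩ := hH.2 ((1 / (n : ℝ) ^ 2 : ℝ) : AddCircle (1 : ℝ))
  replace hch : c + h = ((1 / (n : ℝ) ^ 2 : ℝ) : AddCircle (1 : ℝ)) := hch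
  obtain ⟨k, rfl⟩ := AddSubgroup.mem_zmultiples_iff.1 hc
  have hgH : g ∈ H := by
    rw [← hdiv, ← hch, smul_add, smul_comm, hng, smul_zero, zero_add]
    exact H.nsmul_mem hh n
  -- `g + 0` and `0 + g` are two decompositions of `g`, so they coincide.
  have hg0 : g = 0 := by
    have hpair := @hH.1 (⟨g, AddSubgroup.mem_zmultiples g⟩, ⟨0, H.zero_mem⟩)
      (⟨0, AddSubgroup.zero_mem _⟩, ⟨g, hgH⟩) (by simp)
    exact congrArg (fun p => (p.1 : AddCircle (1 : ℝ))) hpair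
  rw [hg0, addOrderOf_zero] at hord
  omega
end

section
/- Let O(2) denote the group of 2×2 real orthogonal matrices, and let C be a nontrivial finite subgroup of O(2) all of whose elements have determinant 1 (i.e. C is contained in the rotation subgroup SO(2)). Then C has no complement in O(2): there is no subgroup H of O(2) such that every element of O(2) can be written uniquely as c·h with c ∈ C and h ∈ H. -/
/-!
The rotation group `SO(2)` is abelian and divisible. Let `n` be the order of `C` and `c ∈ C`;
choose a rotation `r` with `r ^ n = c`. If `H` were a complement, `r = c' * h` with `c' ∈ C` and
`h ∈ H`, where `h = c'⁻¹ * r` is again a rotation. Since rotations commute and `c' ^ n = 1`,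
`c = r ^ n = h ^ n ∈ H`, so `c ∈ C ∩ H = {1}`. Hence `C` is trivial.

Commutativity and divisibility are read off from the parametrization of rotations by their angle:
`planeRotation_add` and `exists_planeRotation_of_det_eq_one`.
-/

/-- The rotation of the plane by the angle `t`, as an element of `O(2)`. -/
noncomputable def planeRotation (t : ℝ) : Matrix.orthogonalGroup (Fin 2) ℝ :=
  ⟨!![Real.cos t, -Real.sin t; Real.sin t, Real.cos t], by
    rw [Matrix.mem_orthogonalGroup_iff]
    have h := Real.sin_sq_add_cos_sq t
    ext i j
    fin_cases i <;> fin_cases j <;>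
      simp [Matrix.mul_apply, Fin.sum_univ_two, Matrix.star_apply] <;> linarith⟩

lemma planeRotation_add (s t : ℝ) :
    planeRotation (s + t) = planeRotation s * planeRotation t := by
  apply Subtype.ext
  ext i j
  fin_cases i <;> fin_cases j <;>
    simp [planeRotation, Matrix.mul_apply, Fin.sum_univ_two, Real.cos_add, Real.sin_add] <;> ring

lemma planeRotation_zero : planeRotation 0 = 1 := by
  apply Subtype.ext
  ext i j
  fin_cases i <;> fin_cases j <;> simp [planeRotation]

lemma planeRotation_commute (s t : ℝ) : Commute (planeRotation s) (planeRotation t) := by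
  rw [Commute, SemiconjBy, ← planeRotation_add, ← planeRotation_add, add_comm]

lemma planeRotation_nat_mul (n : ℕ) (t : ℝ) :
    planeRotation (n * t) = planeRotation t ^ n := by
  induction n with
  | zero => simp [planeRotation_zero]
  | succ k ih => rw [pow_succ, ← ih, ← planeRotation_add]; congr 1; push_cast; ring

lemma exists_planeRotation_of_det_eq_one (g : Matrix.orthogonalGroup (Fin 2) ℝ)
    (hg : (g : Matrix (Fin 2) (Fin 2) ℝ).det = 1) : ∃ t, g = planeRotation t := by
  obtain ⟨A, hA⟩ := g
  rw [Matrix.mem_orthogonalGroup_iff] at hA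
  have h00 := congrFun (congrFun hA 0) 0
  have h11 := congrFun (congrFun hA 1) 1
  simp [Matrix.mul_apply, Fin.sum_univ_two, Matrix.star_apply] at h00 h11
  simp only [Matrix.det_fin_two] at hg
  -- `(a - d)² + (b + c)² = |A|² - 2 det A = 0` for `A = !![a, b; c, d]`.
  have hd : A 0 0 = A 1 1 := by nlinarith [sq_nonneg (A 0 0 - A 1 1), sq_nonneg (A 0 1 + A 1 0)]
  have hb : A 0 1 = -A 1 0 := by nlinarith [sq_nonneg (A 0 0 - A 1 1), sq_nonneg (A 0 1 + A 1 0)]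
  have hn : ‖(⟨A 1 1, A 1 0⟩ : ℂ)‖ = 1 := by
    rw [Complex.norm_def, Complex.normSq_mk, Real.sqrt_eq_one]; linarith
  have hz : (⟨A 1 1, A 1 0⟩ : ℂ) ≠ 0 := by
    intro h; rw [h] at hn; simp at hn
  refine ⟨Complex.arg ⟨A 1 1, A 1 0⟩, Subtype.ext ?_⟩
  ext i j
  fin_cases i <;> fin_cases j <;>
    simp [planeRotation, Complex.cos_arg hz, Complex.sin_arg, hn, hd, hb]

/-- A nontrivial finite subgroup of `O(2)` contained in the rotation subgroup `SO(2)`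
(all elements have determinant `1`) has no complement in `O(2)`. -/
theorem no_complement_in_O2_of_rotations
    (C : Subgroup (Matrix.orthogonalGroup (Fin 2) ℝ))
    (hfin : Finite C) (hC : C ≠ ⊥)
    (hdet : ∀ c ∈ C, ((c : Matrix (Fin 2) (Fin 2) ℝ)).det = 1) :
    ¬ ∃ H : Subgroup (Matrix.orthogonalGroup (Fin 2) ℝ), C.IsComplement' H := by
  rintro ⟨H, hH⟩
  refine hC ((Subgroup.eq_bot_iff_forall C).2 fun c hc => ?_)
  have hn : (Nat.card C : ℝ) ≠ 0 := Nat.cast_ne_zero.2 Nat.card_pos.ne'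
  obtain ⟨t, rfl⟩ := exists_planeRotation_of_det_eq_one c (hdet c hc)
  obtain ⟨⟨⟨c', hc'⟩, ⟨h, hh⟩⟩, hr⟩ := hH.surjective (planeRotation (t / Nat.card C))
  have hr : c' * h = planeRotation (t / Nat.card C) := hr
  have hpow : c' ^ Nat.card C = 1 := congrArg Subtype.val (pow_card_eq_one' (x := (⟨c', hc'⟩ : C)))
  obtain ⟨s, rfl⟩ := exists_planeRotation_of_det_eq_one c' (hdet c' hc')
  have hcomm : Commute (planeRotation s) h := by
    rw [← inv_mul_eq_iff_eq_mul.2 hr.symm]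
    exact (Commute.refl _).inv_right.mul_right (planeRotation_commute _ _)
  have key : planeRotation t = h ^ Nat.card C := by
    rw [← one_mul (h ^ _), ← hpow, ← hcomm.mul_pow, hr, ← planeRotation_nat_mul,
      mul_div_cancel₀ _ hn]
  exact Subgroup.disjoint_def.1 hH.disjoint hc (key ▸ H.pow_mem hh _)
end

section
/- Let Γ = O(2) × C₂, where O(2) is the group of 2×2 real orthogonal matrices and C₂ = {1, −1} is a cyclic group of order 2 (Γ is isomorphic to the point group D_∞h). Call an element (Q, ε) ∈ Γ a pure rotation if det(Q)·ε = 1. Let A be a normal subgroup of Γ such that A ∩ (SO(2) × {1}) is nontrivial and finite, and such that every pure rotation in A lies in SO(2) × {1}. Then A has no complement in Γ: there is no subgroup H of Γ such that every element of Γ can be written uniquely as a·h with a ∈ A and h ∈ H. -/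
/-!
The rotations `SO(2)` form a divisible abelian group, so a nontrivial finite
subgroup of it is never a direct factor.

Let `B = A ∩ (SO(2) × {1})`, a finite group of order `k`. A reflection `(S, 1) ∈ A` would give,
by normality, all commutators `[R, S] = R²` with `R` a rotation, so `B` would contain every rotation,
although `B` has exponent dividing `k`; and `(S, -1)` is a pure rotation outside `SO(2) × {1}`.
Hence `A ≤ SO(2) × C₂`, which is abelian, and `a ^ (2k) = 1` for every `a ∈ A`.

Given a complement `H` and `1 ≠ x ∈ B`, choose a rotation `r` with `r ^ (2k) = x` and write `r = a h`.
Since `a` and `h` commute, `x = a ^ (2k) h ^ (2k) = h ^ (2k) ∈ A ∩ H = 1`, a contradiction.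
-/

/-- The rotation of the plane by the angle `t`, as an element of `O(2)`. -/
noncomputable def planeRot (t : ℝ) : Matrix.orthogonalGroup (Fin 2) ℝ :=
  ⟨!![Real.cos t, -Real.sin t; Real.sin t, Real.cos t], by
    have h := Real.sin_sq_add_cos_sq t
    rw [Matrix.mem_orthogonalGroup_iff]
    ext i j
    fin_cases i <;> fin_cases j <;>
      simp [Matrix.mul_apply, Fin.sum_univ_two] <;> nlinarith⟩

theorem planeRot_coe (t : ℝ) : (planeRot t : Matrix (Fin 2) (Fin 2) ℝ) =
    !![Real.cos t, -Real.sin t; Real.sin t, Real.cos t] := rfl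

theorem planeRot_det (t : ℝ) : (planeRot t : Matrix (Fin 2) (Fin 2) ℝ).det = 1 := by
  rw [planeRot_coe, Matrix.det_fin_two_of]
  nlinarith [Real.sin_sq_add_cos_sq t]

theorem planeRot_add (s t : ℝ) : planeRot (s + t) = planeRot s * planeRot t := by
  apply Subtype.ext
  ext i j
  fin_cases i <;> fin_cases j <;>
    simp [planeRot_coe, Matrix.mul_apply, Fin.sum_univ_two, Real.cos_add, Real.sin_add] <;> ring

theorem planeRot_zero : planeRot 0 = 1 := by
  apply Subtype.ext
  ext i j
  fin_cases i <;> fin_cases j <;> simp [planeRot_coe]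

theorem planeRot_pow (t : ℝ) (n : ℕ) : planeRot t ^ n = planeRot (n * t) := by
  induction n with
  | zero => simp [planeRot_zero]
  | succ n ih => rw [pow_succ, ih, ← planeRot_add]; push_cast; ring_nf

theorem planeRot_pi_ne_one : planeRot Real.pi ≠ 1 := by
  intro h
  have h2 := congrFun (congrFun (congrArg Subtype.val h) 0) 0
  norm_num [planeRot_coe] at h2

theorem orthogonal_det_eq (Q : Matrix.orthogonalGroup (Fin 2) ℝ) :
    (Q : Matrix (Fin 2) (Fin 2) ℝ).det = 1 ∨ (Q : Matrix (Fin 2) (Fin 2) ℝ).det = -1 := by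
  have h := congrArg Matrix.det ((Matrix.mem_orthogonalGroup_iff (Fin 2) ℝ).1 Q.2)
  rw [Matrix.det_mul, Matrix.det_transpose, Matrix.det_one] at h
  exact mul_self_eq_one_iff.1 h

/-- The relation `Qᵀ = det Q • adj Q`, read off on the second row of `Q`, together with
the first row being a unit vector. -/
theorem orthogonal_entries (Q : Matrix.orthogonalGroup (Fin 2) ℝ) :
    Q.1 0 0 ^ 2 + Q.1 0 1 ^ 2 = 1 ∧ Q.1 1 1 = Q.1.det * Q.1 0 0 ∧
      Q.1 1 0 = - Q.1.det * Q.1 0 1 := by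
  have h := (Matrix.mem_orthogonalGroup_iff (Fin 2) ℝ).1 Q.2
  have h00 := congrFun (congrFun h 0) 0
  have h01 := congrFun (congrFun h 0) 1
  simp [Matrix.mul_apply, Fin.sum_univ_two] at h00 h01
  rw [Matrix.det_fin_two]
  refine ⟨by linarith, ?_, ?_⟩
  · linear_combination (-Q.1 1 1) * h00 + Q.1 0 1 * h01
  · linear_combination (-Q.1 1 0) * h00 + Q.1 0 0 * h01

theorem exists_planeRot (Q : Matrix.orthogonalGroup (Fin 2) ℝ)
    (hQ : (Q : Matrix (Fin 2) (Fin 2) ℝ).det = 1) : ∃ t, Q = planeRot t := by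
  obtain ⟨h1, h2, h3⟩ := orthogonal_entries Q
  rw [hQ] at h2 h3
  -- the angle is the argument of the unit complex number given by the first column
  let z : ℂ := ⟨Q.1 0 0, Q.1 1 0⟩
  have hz : ‖z‖ = 1 := by
    rw [Complex.norm_def, Complex.normSq_apply, Real.sqrt_eq_one]
    simp only [z]
    rw [h3]
    linarith
  have hz0 : z ≠ 0 := by
    intro h
    simp [h] at hz
  have hc : Real.cos z.arg = Q.1 0 0 := by rw [Complex.cos_arg hz0, hz, div_one]
  have hs : Real.sin z.arg = Q.1 1 0 := by rw [Complex.sin_arg, hz, div_one]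
  refine ⟨z.arg, Subtype.ext ?_⟩
  rw [planeRot_coe, hc, hs]
  ext i j
  fin_cases i <;> fin_cases j <;> simp [h2, h3]

/-- Conjugation by a reflection inverts rotations. -/
theorem reflection_conj (S : Matrix.orthogonalGroup (Fin 2) ℝ)
    (hS : (S : Matrix (Fin 2) (Fin 2) ℝ).det = -1) (t : ℝ) :
    S * planeRot (-t) = planeRot t * S := by
  obtain ⟨-, h2, h3⟩ := orthogonal_entries S
  rw [hS] at h2 h3
  apply Subtype.ext
  ext i j
  fin_cases i <;> fin_cases j <;>
    simp [planeRot_coe, Matrix.mul_apply, Fin.sum_univ_two, h2, h3] <;> ring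

theorem commute_of_det_eq_one (P Q : Matrix.orthogonalGroup (Fin 2) ℝ)
    (hP : (P : Matrix (Fin 2) (Fin 2) ℝ).det = 1)
    (hQ : (Q : Matrix (Fin 2) (Fin 2) ℝ).det = 1) : Commute P Q := by
  obtain ⟨s, rfl⟩ := exists_planeRot P hP
  obtain ⟨t, rfl⟩ := exists_planeRot Q hQ
  rw [commute_iff_eq, ← planeRot_add, ← planeRot_add, add_comm]

/-- The subgroup `SO(2) × {1}` of `O(2) × C₂`. -/
def axialRotations : Subgroup (Matrix.orthogonalGroup (Fin 2) ℝ × ℤˣ) where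
  carrier := {x | (x.1 : Matrix (Fin 2) (Fin 2) ℝ).det = 1 ∧ x.2 = 1}
  mul_mem' := by
    rintro x y ⟨h1, h2⟩ ⟨h3, h4⟩
    simp [h1, h2, h3, h4]
  one_mem' := by simp
  inv_mem' := by
    rintro x ⟨h1, h2⟩
    refine ⟨?_, by simp [h2]⟩
    change (star (x.1 : Matrix (Fin 2) (Fin 2) ℝ)).det = 1
    rw [Matrix.star_eq_conjTranspose, Matrix.det_conjTranspose, h1, star_one]


/-- In `Γ = O(2) × C₂` (isomorphic to the point group `D_∞h`, with `C₂ = {1,-1} ≅ ℤˣ`),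
a normal subgroup `A` whose intersection with `SO(2) × {1}` is nontrivial and finite,
and all of whose pure rotations (elements `(Q, ε)` with `det Q · ε = 1`) lie in
`SO(2) × {1}`, has no complement in `Γ`. -/
theorem no_complement_in_O2_prod_C2
    (A : Subgroup (Matrix.orthogonalGroup (Fin 2) ℝ × ℤˣ)) (hA : A.Normal)
    (hfin : {x : Matrix.orthogonalGroup (Fin 2) ℝ × ℤˣ |
        x ∈ A ∧ ((x.1 : Matrix (Fin 2) (Fin 2) ℝ).det = 1 ∧ x.2 = 1)}.Finite)
    (hnt : ∃ x ∈ A, ((x.1 : Matrix (Fin 2) (Fin 2) ℝ).det = 1 ∧ x.2 = 1) ∧ x ≠ 1)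
    (hpure : ∀ x ∈ A,
        (x.1 : Matrix (Fin 2) (Fin 2) ℝ).det * (((x.2 : ℤˣ) : ℤ) : ℝ) = 1 →
        ((x.1 : Matrix (Fin 2) (Fin 2) ℝ).det = 1 ∧ x.2 = 1)) :
    ¬ ∃ H : Subgroup (Matrix.orthogonalGroup (Fin 2) ℝ × ℤˣ), A.IsComplement' H := by
  rintro ⟨H, hH⟩
  -- `k` is the order of the finite group `A ∩ (SO(2) × {1})`
  have : Finite ↥(A ⊓ axialRotations) := hfin.to_subtype
  set k := Nat.card ↥(A ⊓ axialRotations) with hk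
  have hk0 : (k : ℝ) ≠ 0 := Nat.cast_ne_zero.2 Nat.card_pos.ne'
  have hpow : ∀ y ∈ A, y ∈ axialRotations → y ^ k = 1 := fun y hy hy' =>
    congrArg Subtype.val (pow_card_eq_one' (x := (⟨y, hy, hy'⟩ : ↥(A ⊓ axialRotations))))
  have hdet : ∀ a ∈ A, (a.1 : Matrix (Fin 2) (Fin 2) ℝ).det = 1 := by
    intro a ha
    refine (orthogonal_det_eq a.1).resolve_right fun hneg => ?_
    rcases Int.units_eq_one_or a.2 with h2 | h2
    · -- the commutator of `a` with the rotation by `π / (2k)` is the rotation by `π / k`,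
      -- whose `k`-th power is not the identity
      set t : ℝ := Real.pi / (2 * k) with ht
      have hmem : ((planeRot (t + t), 1) : Matrix.orthogonalGroup (Fin 2) ℝ × ℤˣ) ∈ A := by
        have h := A.mul_mem (hA.conj_mem a ha (planeRot t, 1)) (A.inv_mem ha)
        convert h using 1
        have hinv : (planeRot t)⁻¹ = planeRot (-t) := by
          rw [inv_eq_iff_mul_eq_one, ← planeRot_add, add_neg_cancel, planeRot_zero]
        refine Prod.ext ?_ (by simp)
        simp only [Prod.fst_mul, Prod.fst_inv, hinv]
        rw [mul_assoc (planeRot t), reflection_conj a.1 hneg, planeRot_add]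
        group
      have h := congrArg Prod.fst (hpow _ hmem ⟨planeRot_det _, rfl⟩)
      rw [Prod.pow_fst, planeRot_pow] at h
      refine planeRot_pi_ne_one (Eq.trans ?_ h)
      rw [ht]
      congr 1
      field_simp
      ring
    · have := (hpure a ha (by rw [hneg, h2]; norm_num)).1
      linarith
  have hexp : ∀ a ∈ A, a ^ (2 * k) = 1 := by
    intro a ha
    rw [pow_mul]
    refine hpow _ (A.pow_mem ha 2) ⟨?_, by simp⟩
    simp [hdet a ha]
  obtain ⟨x, hxA, ⟨hx1, hx2⟩, hxne⟩ := hnt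
  obtain ⟨t, hxt⟩ := exists_planeRot x.1 hx1
  set r : Matrix.orthogonalGroup (Fin 2) ℝ × ℤˣ := (planeRot (t / (2 * k)), 1) with hr
  have hrx : r ^ (2 * k) = x := by
    refine Prod.ext ?_ (by simp [hr, hx2])
    rw [Prod.pow_fst, planeRot_pow, hxt]
    congr 1
    push_cast
    field_simp
  obtain ⟨⟨⟨a, ha⟩, ⟨h, hh⟩⟩, hah⟩ := hH.2 r
  change a * h = r at hah
  have hcomm : Commute a h := by
    have har : Commute a r :=
      Prod.commute_iff.2 ⟨commute_of_det_eq_one _ _ (hdet a ha) (planeRot_det _), Commute.all _ _⟩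
    rw [eq_inv_mul_of_mul_eq hah]
    exact (Commute.refl a).inv_right.mul_right har
  have hxh : x = h ^ (2 * k) := by
    rw [← hrx, ← hah, hcomm.mul_pow, hexp a ha, one_mul]
  have hxH : x ∈ H := hxh ▸ H.pow_mem hh _
  exact hxne (Subgroup.disjoint_def.1 hH.disjoint hxA hxH)
end

section
/- Let G be the circle group (the multiplicative group of complex numbers of modulus 1, which is SO(2)) acting on a set Ω, and let S be a finite subgroup of G of order n ≥ 2. If B ⊆ Ω is nonempty, invariant under all of G (g•B = B for every g ∈ G), and S acts freely on B (Stab_S(b) is trivial for every b ∈ B), then B has infinitely many S-orbits. -/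
/-!
If `B` had finitely many `S`-orbits, it would be finite, since each orbit of the finite group `S`
is finite. The circle orbit of a point `b ∈ B` lies in `B`, so the stabilizer of `b` in the circle
would have finite index `n ≠ 0` and hence contain every `n`-th power. The circle is divisible, so
the stabilizer would be the whole circle; a nontrivial element of `S` would then fix `b`,
contradicting freeness.
-/

open Pointwise

/-- The circle group is divisible. -/
lemma circle_exists_pow_eq (z : Circle) {n : ℕ} (hn : n ≠ 0) : ∃ w : Circle, w ^ n = z := by
  refine ⟨Circle.exp (Complex.arg z / n), ?_⟩
  have hn' : (n : ℝ) ≠ 0 := Nat.cast_ne_zero.mpr hn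
  rw [← Circle.exp_nsmul, nsmul_eq_mul, mul_div_cancel₀ _ hn', Circle.exp_arg]

/-- If the circle group (≅ SO(2)) acts on `Ω`, `S` is a finite subgroup of order at
least `2`, and `B ⊆ Ω` is nonempty, invariant under the whole circle group, and acted
on freely by `S`, then `B` has infinitely many `S`-orbits. -/
theorem infinite_orbits_of_free_circle_invariant
    {Ω : Type*} [MulAction Circle Ω] (S : Subgroup Circle)
    (hfin : Finite S) (hcard : 2 ≤ Nat.card S)
    (B : Set Ω) (hne : B.Nonempty)
    (hinv : ∀ g : Circle, g • B = B)
    (hfree : ∀ b ∈ B, ∀ s : S, (s : Circle) • b = b → s = 1) :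
    Infinite (Quotient (Setoid.ker fun b : B => MulAction.orbit S (b : Ω))) := by
  by_contra hinf
  rw [not_infinite_iff_finite] at hinf
  obtain ⟨b, hb⟩ := hne
  have hrange : (Set.range fun b : B => MulAction.orbit S (b : Ω)).Finite :=
    Set.finite_coe_iff.mp (Finite.of_equiv _ (Setoid.quotientKerEquivRange _))
  have hB : B.Finite := by
    refine (hrange.sUnion ?_).subset
      fun x hx => ⟨_, ⟨⟨x, hx⟩, rfl⟩, MulAction.mem_orbit_self x⟩
    rintro _ ⟨x, rfl⟩
    exact Set.finite_range _
  have horb : (MulAction.orbit Circle b).Finite := by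
    refine hB.subset ?_
    rintro _ ⟨g, rfl⟩
    rw [← hinv g]
    exact Set.smul_mem_smul_set hb
  have hindex : (MulAction.stabilizer Circle b).index ≠ 0 := by
    rw [MulAction.index_stabilizer]
    exact (Set.ncard_pos horb).mpr ⟨b, MulAction.mem_orbit_self b⟩ |>.ne'
  have : Nontrivial S := Finite.one_lt_card_iff_nontrivial.mp hcard
  obtain ⟨s, hs⟩ := exists_ne (1 : S)
  obtain ⟨w, hw⟩ := circle_exists_pow_eq (s : Circle) hindex
  refine hs (hfree b hb s ?_)
  rw [← hw]
  exact Subgroup.pow_index_mem (MulAction.stabilizer Circle b) w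
end

section
/- Let G be a group acting on sets X and Y, let F : X → 𝒫(Y) be a G-equivariant set-valued function (F(g•x) = g•F(x) elementwise, for all g ∈ G, x ∈ X), and let f : X → Y be a selection of F, i.e. f(x) ∈ F(x) for all x. Suppose moreover that for every x ∈ X, F(x) is contained in the orbit of f(x) under Stab_G(x). Then f satisfies relaxed equivariance: for every g ∈ G and x ∈ X there exists s ∈ Stab_G(x) such that f(g•x) = (g·s)•f(x). -/
open Pointwise

/-- A selection `f` of a `G`-equivariant set-valued function `F` whose values lie in the
orbit of `f x` under `Stab_G(x)` satisfies relaxed equivariance: for every `g` and `x`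
there is `s ∈ Stab_G(x)` with `f (g • x) = (g * s) • f x`. -/
theorem relaxed_equivariance_of_selection
    {G X Y : Type*} [Group G] [MulAction G X] [MulAction G Y]
    (F : X → Set Y) (hF : ∀ (g : G) (x : X), F (g • x) = g • F x)
    (f : X → Y) (hsel : ∀ x : X, f x ∈ F x)
    (horb : ∀ x : X, F x ⊆ MulAction.orbit (MulAction.stabilizer G x) (f x)) :
    ∀ (g : G) (x : X), ∃ s ∈ MulAction.stabilizer G x, f (g • x) = (g * s) • f x := by
  intro g x
  have h : f (g • x) ∈ g • F x := hF g x ▸ hsel (g • x)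
  obtain ⟨y, hy, hgy⟩ := Set.mem_smul_set.mp h
  obtain ⟨s, rfl⟩ := horb x hy
  exact ⟨s, s.2, by rw [← hgy, mul_smul]; rfl⟩
end

section
/- Let n ≥ 2 and let D be the group with presentation ⟨a, b, m | a^{2n} = b² = m² = (ab)² = (am)² = (bm)² = 1⟩ (isomorphic to the point group D_{(2n)h}). Then the subgroup of D generated by {a², b} (isomorphic to the point group D_n) and the subgroup generated by {a·m, b·m} (isomorphic to C_{2v}) are complements: every element of D can be written uniquely as s·h with s in the subgroup generated by {a², b} and h in the subgroup generated by {a·m, b·m}. -/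
/-!
The relations say that `b` and `m` are commuting involutions, each inverting `a`. Write
`S = ⟨a², b⟩` and `H = ⟨am, bm⟩`.

* `S` is normal: it is normalized by the involutions `b`, `m`, `ab`, which generate the group. Also
  `b`, `m = b·(bm)` and `a = (ab)·b = (am)(bm)·b` lie in `S ⊔ H`, so `S H` is the whole group.
* `am` and `bm` are commuting involutions, so `H = {1, am, bm, ab}`. The homomorphism to
  `{±1} × {±1}` recording the parities of the exponents of `a` and `m` (well defined because all
  relators have even exponents in `a` and `m`) kills `S` and is nontrivial on `am`, `bm` and `ab`,
  so `S ∩ H = 1`.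
-/

/-- Relations for the point group `D_{(2n)h}`, presented on generators `a, b, m`
(encoded as `0, 1, 2 : Fin 3`) with relations
`a^{2n} = b² = m² = (ab)² = (am)² = (bm)² = 1`. -/
def D2nhRels (n : ℕ) : Set (FreeGroup (Fin 3)) :=
  {(FreeGroup.of 0) ^ (2 * n), (FreeGroup.of 1) ^ 2, (FreeGroup.of 2) ^ 2,
    (FreeGroup.of 0 * FreeGroup.of 1) ^ 2, (FreeGroup.of 0 * FreeGroup.of 2) ^ 2,
    (FreeGroup.of 1 * FreeGroup.of 2) ^ 2}

/-- An involution normalizes a closure as soon as it conjugates the generators into it. -/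
lemma mem_normalizer_closure_of_involution {G : Type*} [Group G] {s : Set G} {x : G}
    (hx : x * x = 1) (h : ∀ y ∈ s, x * y * x⁻¹ ∈ Subgroup.closure s) :
    x ∈ Subgroup.normalizer (Subgroup.closure s : Set G) := by
  have key : ∀ y ∈ Subgroup.closure s, x * y * x⁻¹ ∈ Subgroup.closure s := by
    have : Subgroup.closure s ≤ (Subgroup.closure s).comap (MulAut.conj x).toMonoidHom := by
      rw [Subgroup.closure_le]
      intro y hy
      simpa using h y hy
    intro y hy
    simpa using this hy
  have hinv : x⁻¹ = x := inv_eq_of_mul_eq_one_left hx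
  rw [Subgroup.mem_normalizer_iff]
  refine fun y => ⟨key y, fun hy => ?_⟩
  have := key _ hy
  rwa [hinv, show x * (x * y * x) * x = (x * x) * y * (x * x) by group, hx, one_mul,
    mul_one] at this

/-- Two commuting involutions generate a subgroup with at most the four evident elements. -/
lemma mem_closure_commuting_involutions {G : Type*} [Group G] {x y : G}
    (hx : x * x = 1) (hy : y * y = 1) (hxy : y * x = x * y) {g : G}
    (hg : g ∈ Subgroup.closure ({x, y} : Set G)) : g = 1 ∨ g = x ∨ g = y ∨ g = x * y := by
  have hx' : x⁻¹ = x := inv_eq_of_mul_eq_one_left hx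
  have hy' : y⁻¹ = y := inv_eq_of_mul_eq_one_left hy
  have hxx : ∀ z, x * (x * z) = z := fun z => by rw [← mul_assoc, hx, one_mul]
  have hyxy : y * (x * y) = x := by rw [← mul_assoc, hxy, mul_assoc, hy, mul_one]
  induction hg using Subgroup.closure_induction_left with
  | one => exact Or.inl rfl
  | mul_left z hz w _ ih =>
    rcases hz with rfl | rfl <;> rcases ih with rfl | rfl | rfl | rfl <;> simp [*]
  | inv_mul_cancel z hz w _ ih =>
    rcases hz with rfl | rfl <;> rcases ih with rfl | rfl | rfl | rfl <;> simp [*]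

/-- The complement property in any group generated by `a`, `b`, `m` subject to the relations
(that of `a ^ (2 * n)` enters only through `f`) and admitting the parity homomorphism `f`. -/
lemma isComplement'_of_parity {G : Type*} [Group G] {a b m : G}
    (hb : b ^ 2 = 1) (hm : m ^ 2 = 1) (hab : (a * b) ^ 2 = 1) (ham : (a * m) ^ 2 = 1)
    (hbm : (b * m) ^ 2 = 1) (hgen : ∀ K : Subgroup G, a ∈ K → b ∈ K → m ∈ K → K = ⊤)
    (f : G →* ℤˣ × ℤˣ) (fa : f a = (-1, 1)) (fb : f b = 1) (fm : f m = (1, -1)) :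
    Subgroup.IsComplement' (Subgroup.closure {a ^ 2, b}) (Subgroup.closure {a * m, b * m}) := by
  rw [pow_two] at hb hm hab ham hbm
  have hb' : b⁻¹ = b := inv_eq_of_mul_eq_one_left hb
  have hm' : m⁻¹ = m := inv_eq_of_mul_eq_one_left hm
  have bm : m * b = b * m := by
    rw [← inv_eq_of_mul_eq_one_left hbm, mul_inv_rev, hb', hm']
  have ba : b * a * b = a⁻¹ := by
    rw [eq_inv_iff_mul_eq_one, ← mul_left_inj b, ← mul_right_inj b]
    calc b * (b * a * b * a * b) = (b * b) * (a * b * (a * b)) := by group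
      _ = b * (1 * b) := by rw [hb, hab, one_mul, one_mul, hb]
  have ma : m * a * m = a⁻¹ := by
    rw [eq_inv_iff_mul_eq_one, ← mul_left_inj m, ← mul_right_inj m]
    calc m * (m * a * m * a * m) = (m * m) * (a * m * (a * m)) := by group
      _ = m * (1 * m) := by rw [hm, ham, one_mul, one_mul, hm]
  set S := Subgroup.closure {a ^ 2, b} with hS
  set H := Subgroup.closure {a * m, b * m} with hH
  have a2S : a ^ 2 ∈ S := Subgroup.subset_closure (by simp)
  have bS : b ∈ S := Subgroup.subset_closure (by simp)
  have amH : a * m ∈ H := Subgroup.subset_closure (by simp)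
  have bmH : b * m ∈ H := Subgroup.subset_closure (by simp)
  have hambm : a * m * (b * m) = a * b := by
    rw [← bm, mul_assoc, ← mul_assoc m m b, hm, one_mul]
  have hSn : S.Normal := by
    rw [← Subgroup.normalizer_eq_top_iff]
    have bN : b ∈ Subgroup.normalizer (S : Set G) := Subgroup.le_normalizer bS
    have mN : m ∈ Subgroup.normalizer (S : Set G) := by
      refine mem_normalizer_closure_of_involution hm ?_
      rintro y (rfl | rfl)
      · rw [← conj_pow, hm', ma, inv_pow]
        exact S.inv_mem a2S
      · rwa [bm, mul_inv_cancel_right]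
    have abN : a * b ∈ Subgroup.normalizer (S : Set G) := by
      refine mem_normalizer_closure_of_involution hab ?_
      rintro y (rfl | rfl)
      · rw [← conj_pow, mul_inv_rev, hb',
          show a * b * a * (b * a⁻¹) = a * (b * a * b) * a⁻¹ by group, ba, mul_inv_cancel,
          one_mul, inv_pow]
        exact S.inv_mem a2S
      · rw [inv_eq_of_mul_eq_one_left hab, mul_assoc a y y, hb, mul_one, ← mul_assoc, ← pow_two]
        exact S.mul_mem a2S bS
    refine hgen _ ?_ bN mN
    simpa [mul_assoc, hb] using mul_mem abN bN
  refine Subgroup.isComplement'_of_disjoint_and_mul_eq_univ ?_ ?_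
  · rw [Subgroup.disjoint_def]
    intro g hgS hgH
    have hSf : S ≤ f.ker := by
      rw [hS, Subgroup.closure_le]
      rintro y (rfl | rfl)
      · simp [MonoidHom.mem_ker, fa]
      · exact fb
    have hfg : f g = 1 := hSf hgS
    have hcomm : b * m * (a * m) = a * m * (b * m) := by
      rw [hambm, mul_assoc, ← mul_assoc m a m, ma, ← inv_eq_of_mul_eq_one_left hab,
        mul_inv_rev, hb']
    rcases mem_closure_commuting_involutions ham hbm hcomm hgH with h | h | h | h
    · exact h
    all_goals
      rw [h] at hfg
      simp only [map_mul, fa, fb, fm] at hfg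
      exact absurd hfg (by decide)
  · rw [← Subgroup.normal_mul, hgen (S ⊔ H), Subgroup.coe_top]
    · have := (S ⊔ H).mul_mem ((S ⊔ H).mul_mem (Subgroup.mem_sup_right amH)
        (Subgroup.mem_sup_right bmH)) (Subgroup.mem_sup_left bS)
      rwa [hambm, mul_assoc, hb, mul_one] at this
    · exact Subgroup.mem_sup_left bS
    · have := Subgroup.mul_mem_sup bS bmH
      rwa [← mul_assoc, hb, one_mul] at this

/-- The parities of the exponents of `a` and of `m`, as a pair of signs. -/
def D2nhParity (n : ℕ) : PresentedGroup (D2nhRels n) →* ℤˣ × ℤˣ :=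
  PresentedGroup.toGroup (f := ![(-1, 1), 1, (1, -1)]) (by
    rintro r (rfl | rfl | rfl | rfl | rfl | rfl) <;> simp [pow_mul])

/-- In the presented group `D_{(2n)h} = ⟨a,b,m | a^{2n}, b², m², (ab)², (am)², (bm)²⟩`,
the subgroup generated by `{a², b}` (≅ `D_n`) and the subgroup generated by
`{a·m, b·m}` (≅ `C_{2v}`) are complements. -/
theorem D2nh_complement (n : ℕ) (hn : 2 ≤ n) :
    Subgroup.IsComplement'
      (Subgroup.closure
        {(PresentedGroup.of (0 : Fin 3) : PresentedGroup (D2nhRels n)) ^ 2,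
          PresentedGroup.of 1})
      (Subgroup.closure
        {(PresentedGroup.of (0 : Fin 3) : PresentedGroup (D2nhRels n)) *
            PresentedGroup.of 2,
          PresentedGroup.of 1 * PresentedGroup.of 2}) := by
  have rel : ∀ r ∈ D2nhRels n, PresentedGroup.mk (D2nhRels n) r = 1 :=
    fun r hr => PresentedGroup.one_of_mem hr
  refine isComplement'_of_parity (rel (FreeGroup.of 1 ^ 2) (by simp [D2nhRels]))
    (rel (FreeGroup.of 2 ^ 2) (by simp [D2nhRels]))
    (rel ((FreeGroup.of 0 * FreeGroup.of 1) ^ 2) (by simp [D2nhRels]))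
    (rel ((FreeGroup.of 0 * FreeGroup.of 2) ^ 2) (by simp [D2nhRels]))
    (rel ((FreeGroup.of 1 * FreeGroup.of 2) ^ 2) (by simp [D2nhRels])) ?_ (D2nhParity n)
    (PresentedGroup.toGroup.of _) (PresentedGroup.toGroup.of _) (PresentedGroup.toGroup.of _)
  intro K ha hb hm
  rw [eq_top_iff, ← PresentedGroup.closure_range_of, Subgroup.closure_le]
  rintro _ ⟨i, rfl⟩
  fin_cases i
  exacts [ha, hb, hm]
end

section
/- Let O_h be the group with presentation ⟨a, b, i | a⁴ = b⁴ = i² = (aba)² = (ab)³ = 1, i·a·i·a⁻¹ = 1, i·b·i·b⁻¹ = 1⟩ (isomorphic to the full octahedral point group O_h of order 48). Then the subgroup of O_h generated by {a·b, b·a} (isomorphic to the tetrahedral rotation group T of order 12) and the subgroup generated by {a²·b, i} (isomorphic to the point group S₄, cyclic of order 4) are complements: every element of O_h can be written uniquely as s·h with s in the subgroup generated by {a·b, b·a} and h in the subgroup generated by {a²·b, i}. -/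
/-!
Write `T = ⟨ab, ba⟩`, `t = a²b` and `H = ⟨t, i⟩`.

`T` is normal: the relation `(aba)² = 1` reads `(ab)·a²·(ba) = 1`, so `a² ∈ T`, and then
`b² = (ba)·a⁻²·(ab) ∈ T`. Conjugation by `a` or `b` swaps `ab` and `ba` up to conjugation by
`a²` or `b²`, and `i` is central. Since `t = a·(ab)`, the subgroup `T ⊔ H` contains `a`, `b`
and `i`, so `T H` is the whole group.

For uniqueness, `a, b ↦ (-1, 1)`, `i ↦ (1, -1)` defines a homomorphism `OhSign` to `ℤˣ × ℤˣ`
which kills `T`. Also `t² = i² = 1` and `i` commutes with `t`, so `H = {1, t, i, ti}`, on which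
`OhSign` is injective; hence `T ∩ H = 1`. No enumeration of the 48 elements is needed.
-/

/-- Relations for the full octahedral point group `O_h`, presented on generators
`a, b, i` (encoded as `0, 1, 2 : Fin 3`) with relations
`a⁴ = b⁴ = i² = (aba)² = (ab)³ = 1`, `i·a·i·a⁻¹ = 1`, `i·b·i·b⁻¹ = 1`. -/
def OhRels : Set (FreeGroup (Fin 3)) :=
  {(FreeGroup.of 0) ^ 4, (FreeGroup.of 1) ^ 4, (FreeGroup.of 2) ^ 2,
    (FreeGroup.of 0 * FreeGroup.of 1 * FreeGroup.of 0) ^ 2,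
    (FreeGroup.of 0 * FreeGroup.of 1) ^ 3,
    FreeGroup.of 2 * FreeGroup.of 0 * FreeGroup.of 2 * (FreeGroup.of 0)⁻¹,
    FreeGroup.of 2 * FreeGroup.of 1 * FreeGroup.of 2 * (FreeGroup.of 1)⁻¹}

/-- To check that conjugation by `g` stabilizes `closure S`, it suffices to check that conjugation
by `g` and by `g⁻¹` send the generators into it. -/
lemma mem_normalizer_closure {G : Type*} [Group G] {S : Set G} {g : G}
    (h₁ : ∀ s ∈ S, g * s * g⁻¹ ∈ Subgroup.closure S)
    (h₂ : ∀ s ∈ S, g⁻¹ * s * g ∈ Subgroup.closure S) :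
    g ∈ Subgroup.normalizer (Subgroup.closure S : Set G) := by
  have key : ∀ k : G, (∀ s ∈ S, k * s * k⁻¹ ∈ Subgroup.closure S) →
      ∀ n ∈ Subgroup.closure S, k * n * k⁻¹ ∈ Subgroup.closure S := by
    intro k hk n hn
    have : Subgroup.closure S ≤ (Subgroup.closure S).comap (MulAut.conj k).toMonoidHom :=
      (Subgroup.closure_le _).2 hk
    exact this hn
  refine Subgroup.mem_normalizer_iff.2 fun n => ⟨key g h₁ n, fun hn => ?_⟩
  have := key g⁻¹ (by simpa using h₂) _ hn
  simpa [mul_assoc] using this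

/-- If `(aba)² = 1` and `i` commutes with `a` and `b`, then `a`, `b` and `i` normalize
`⟨ab, ba⟩`. -/
lemma mem_normalizer_closure_ab {G : Type*} [Group G] {a b i : G} (h : (a * b * a) ^ 2 = 1)
    (hia : i * a = a * i) (hib : i * b = b * i) :
    a ∈ Subgroup.normalizer (Subgroup.closure {a * b, b * a} : Set G) ∧
    b ∈ Subgroup.normalizer (Subgroup.closure {a * b, b * a} : Set G) ∧
    i ∈ Subgroup.normalizer (Subgroup.closure {a * b, b * a} : Set G) := by
  have hx : a * b ∈ Subgroup.closure {a * b, b * a} := Subgroup.subset_closure (by simp)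
  have hy : b * a ∈ Subgroup.closure {a * b, b * a} := Subgroup.subset_closure (by simp)
  have ha : a * a ∈ Subgroup.closure {a * b, b * a} := by
    have e : a * a = (a * b)⁻¹ * (a * b * a) ^ 2 * (b * a)⁻¹ := by simp [pow_two, mul_assoc]
    rw [e, h, mul_one]
    exact mul_mem (inv_mem hx) (inv_mem hy)
  have hb : b * b ∈ Subgroup.closure {a * b, b * a} := by
    have e : b * b = (b * a) * (a * a)⁻¹ * (a * b) := by group
    rw [e]
    exact mul_mem (mul_mem hy (inv_mem ha)) hx
  have hi : ∀ s ∈ ({a * b, b * a} : Set G), i * s = s * i := by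
    rintro s (rfl | rfl)
    · exact (Commute.mul_right hia hib : Commute i (a * b))
    · exact (Commute.mul_right hib hia : Commute i (b * a))
  refine ⟨mem_normalizer_closure ?_ ?_, mem_normalizer_closure ?_ ?_,
    mem_normalizer_closure ?_ ?_⟩
  · rintro s (rfl | rfl)
    · have e : a * (a * b) * a⁻¹ = (a * a) * (b * a) * (a * a)⁻¹ := by group
      rw [e]
      exact mul_mem (mul_mem ha hy) (inv_mem ha)
    · simpa [mul_assoc] using hx
  · rintro s (rfl | rfl)
    · simpa [mul_assoc] using hy
    · have e : a⁻¹ * (b * a) * a = (a * a)⁻¹ * (a * b) * (a * a) := by group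
      rw [e]
      exact mul_mem (mul_mem (inv_mem ha) hx) ha
  · rintro s (rfl | rfl)
    · simpa [mul_assoc] using hy
    · have e : b * (b * a) * b⁻¹ = (b * b) * (a * b) * (b * b)⁻¹ := by group
      rw [e]
      exact mul_mem (mul_mem hb hx) (inv_mem hb)
  · rintro s (rfl | rfl)
    · have e : b⁻¹ * (a * b) * b = (b * b)⁻¹ * (b * a) * (b * b) := by group
      rw [e]
      exact mul_mem (mul_mem (inv_mem hb) hy) hb
    · simpa [mul_assoc] using hx
  · intro s hs
    rw [hi s hs, mul_inv_cancel_right]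
    exact Subgroup.subset_closure hs
  · intro s hs
    rw [mul_assoc, ← hi s hs, inv_mul_cancel_left]
    exact Subgroup.subset_closure hs

/-- Two commuting involutions generate at most a Klein four-group. -/
lemma mem_closure_commuting_involutions_s18 {G : Type*} [Group G] {t i : G} (ht : t * t = 1)
    (hi : i * i = 1) (hti : i * t = t * i) {g : G} (hg : g ∈ Subgroup.closure {t, i}) :
    g = 1 ∨ g = t ∨ g = i ∨ g = t * i := by
  have ht' : ∀ x, t * (t * x) = x := fun x => by rw [← mul_assoc, ht, one_mul]
  have hti' : ∀ x, i * (t * x) = t * (i * x) := fun x => by rw [← mul_assoc, hti, mul_assoc]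
  have hti_inv : t⁻¹ = t ∧ i⁻¹ = i :=
    ⟨inv_eq_of_mul_eq_one_right ht, inv_eq_of_mul_eq_one_right hi⟩
  induction hg using Subgroup.closure_induction with
  | mem x hx => rcases hx with rfl | rfl <;> simp
  | one => simp
  | mul x y _ _ hx hy =>
    rcases hx with rfl | rfl | rfl | rfl <;> rcases hy with rfl | rfl | rfl | rfl <;>
      simp [mul_assoc, ht, hi, hti, ht', hti']
  | inv x _ hx =>
    rcases hx with rfl | rfl | rfl | rfl <;> simp [hti_inv.1, hti_inv.2, hti]

/-- The homomorphism `O_h → ℤˣ × ℤˣ` with `a, b ↦ (-1, 1)` and `i ↦ (1, -1)`: the first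
component is the parity of the rotation part, viewed in the symmetric group on four letters; the
second distinguishes proper from improper elements. -/
def OhSign : PresentedGroup OhRels →* ℤˣ × ℤˣ :=
  PresentedGroup.toGroup (f := (![(-1, 1), (-1, 1), (1, -1)] : Fin 3 → ℤˣ × ℤˣ)) (by
    intro r hr
    simp only [OhRels, Set.mem_insert_iff, Set.mem_singleton_iff] at hr
    rcases hr with rfl | rfl | rfl | rfl | rfl | rfl | rfl <;>
      simp only [map_mul, map_pow, map_inv, FreeGroup.lift_apply_of] <;> decide)

/-- In the presented group `O_h = ⟨a,b,i | a⁴, b⁴, i², (aba)², (ab)³, iaia⁻¹, ibib⁻¹⟩`,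
the subgroup generated by `{a·b, b·a}` (≅ the tetrahedral rotation group `T`) and the
subgroup generated by `{a²·b, i}` (≅ the point group `S₄`) are complements. -/
theorem Oh_complement :
    Subgroup.IsComplement'
      (Subgroup.closure
        {(PresentedGroup.of (0 : Fin 3) : PresentedGroup OhRels) * PresentedGroup.of 1,
          PresentedGroup.of 1 * PresentedGroup.of 0})
      (Subgroup.closure
        {(PresentedGroup.of (0 : Fin 3) : PresentedGroup OhRels) ^ 2 *
            PresentedGroup.of 1,
          PresentedGroup.of 2}) := by
  set a : PresentedGroup OhRels := PresentedGroup.of 0 with ha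
  set b : PresentedGroup OhRels := PresentedGroup.of 1 with hb
  set i : PresentedGroup OhRels := PresentedGroup.of 2 with hi
  have rel : ∀ r ∈ OhRels, PresentedGroup.mk OhRels r = 1 := fun r hr =>
    PresentedGroup.one_of_mem hr
  have hi2 : i * i = 1 := by
    have h : i ^ 2 = 1 := rel (FreeGroup.of 2 ^ 2) (by simp [OhRels])
    rwa [pow_two] at h
  have haba : (a * b * a) ^ 2 = 1 :=
    rel ((FreeGroup.of 0 * FreeGroup.of 1 * FreeGroup.of 0) ^ 2) (by simp [OhRels])
  have hi_inv : i⁻¹ = i := inv_eq_of_mul_eq_one_right hi2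
  have hia : i * a = a * i := by
    have h : i * a * i * a⁻¹ = 1 :=
      rel (FreeGroup.of 2 * FreeGroup.of 0 * FreeGroup.of 2 * (FreeGroup.of 0)⁻¹)
        (by simp [OhRels])
    rw [mul_inv_eq_one, ← eq_mul_inv_iff_mul_eq, hi_inv] at h
    exact h
  have hib : i * b = b * i := by
    have h : i * b * i * b⁻¹ = 1 :=
      rel (FreeGroup.of 2 * FreeGroup.of 1 * FreeGroup.of 2 * (FreeGroup.of 1)⁻¹)
        (by simp [OhRels])
    rw [mul_inv_eq_one, ← eq_mul_inv_iff_mul_eq, hi_inv] at h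
    exact h
  have ht2 : (a ^ 2 * b) * (a ^ 2 * b) = 1 := by
    have e : (a ^ 2 * b) * (a ^ 2 * b) = a * (a * b * a) ^ 2 * a⁻¹ := by
      simp [pow_two, mul_assoc]
    rw [e, haba, mul_one, mul_inv_cancel]
  have hit : i * (a ^ 2 * b) = a ^ 2 * b * i :=
    (Commute.mul_right (Commute.pow_right hia 2) hib : Commute i (a ^ 2 * b))
  have top_le : ∀ K : Subgroup (PresentedGroup OhRels), a ∈ K → b ∈ K → i ∈ K → K = ⊤ := by
    intro K h0 h1 h2
    rw [eq_top_iff, ← PresentedGroup.closure_range_of, Subgroup.closure_le]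
    rintro _ ⟨j, rfl⟩
    fin_cases j
    exacts [h0, h1, h2]
  have hnormal : (Subgroup.closure {a * b, b * a}).Normal := by
    obtain ⟨h0, h1, h2⟩ := mem_normalizer_closure_ab haba hia hib
    exact Subgroup.normalizer_eq_top_iff.1 (top_le _ h0 h1 h2)
  have hsa : OhSign a = (-1, 1) := PresentedGroup.toGroup.of _
  have hsb : OhSign b = (-1, 1) := PresentedGroup.toGroup.of _
  have hsi : OhSign i = (1, -1) := PresentedGroup.toGroup.of _
  have hker : Subgroup.closure {a * b, b * a} ≤ OhSign.ker := by
    rw [Subgroup.closure_le]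
    rintro s (rfl | rfl) <;> simp [MonoidHom.mem_ker, hsa, hsb]
  refine Subgroup.isComplement'_of_disjoint_and_mul_eq_univ ?_ ?_
  · rw [Subgroup.disjoint_def]
    intro g hT hH
    have hg : OhSign g = 1 := hker hT
    rcases mem_closure_commuting_involutions_s18 ht2 hi2 hit hH with h | h | h | h
    · exact h
    all_goals
      rw [h] at hg
      simp only [map_mul, map_pow, hsa, hsb, hsi] at hg
      exact absurd hg (by decide)
  · rw [← Subgroup.normal_mul]
    have hx : a * b ∈ Subgroup.closure {a * b, b * a} ⊔ Subgroup.closure {a ^ 2 * b, i} :=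
      Subgroup.mem_sup_left (Subgroup.subset_closure (by simp))
    have ht : a ^ 2 * b ∈ Subgroup.closure {a * b, b * a} ⊔ Subgroup.closure {a ^ 2 * b, i} :=
      Subgroup.mem_sup_right (Subgroup.subset_closure (by simp))
    have h2 : i ∈ Subgroup.closure {a * b, b * a} ⊔ Subgroup.closure {a ^ 2 * b, i} :=
      Subgroup.mem_sup_right (Subgroup.subset_closure (by simp))
    have h0 : a ∈ Subgroup.closure {a * b, b * a} ⊔ Subgroup.closure {a ^ 2 * b, i} := by
      have e : (a ^ 2 * b) * (a * b)⁻¹ = a := by group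
      have h := mul_mem ht (inv_mem hx)
      rwa [e] at h
    have h1 : b ∈ Subgroup.closure {a * b, b * a} ⊔ Subgroup.closure {a ^ 2 * b, i} :=
      (Subgroup.mul_mem_cancel_left _ h0).1 hx
    rw [top_le _ h0 h1 h2, Subgroup.coe_top]
end
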